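/- Assume ℓ(C) = 1 with f_1 = x (so e_1 = 1 and e_j ≥ 2 for j ≥ 2). Then the S-module D₀(f) is generated by the set G = {ρ_1, ..., ρ_{m−1}, σ^y, σ^z}, and G is a minimal generating set: no element of G lies in the S-submodule of S³ generated by the other m elements of G. In particular C is an (m+1)-syzygy curve with exponents d_1 = ⋯ = d_{m−1} = d−2 and d_m = d_{m+1} = d−1. -/

import Mathlib

open MvPolynomial

noncomputable abbrev S : Type := MvPolynomial (Fin 3) ℂ

/-- The gradient `∇g = (g_x, g_y, g_z)` of a polynomial `g ∈ S = ℂ[x,y,z]`. -/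
noncomputable def grad (g : S) : Fin 3 → S := fun t => pderiv t g

/-- The syzygy triple `ρ_j = Σ_{i≠j} (∏_{k≠i,j} f_k) (∇f_i × ∇f_j)`
of the 2-form `ω_j = df ∧ df_j/f_j`. -/
noncomputable def rho {m : ℕ} (F : Fin m → S) (j : Fin m) : Fin 3 → S :=
  ∑ i ∈ Finset.univ.erase j,
    (∏ k ∈ (Finset.univ.erase j).erase i, F k) • crossProduct (grad (F i)) (grad (F j))

/-- The Jacobian syzygy module `D₀(f) = {(a,b,c) ∈ S³ : a f_x + b f_y + c f_z = 0}`. -/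
noncomputable def D0 (f : S) : Submodule S (Fin 3 → S) where
  carrier := {v | ∑ t, v t * pderiv t f = 0}
  add_mem' {a b} ha hb := by
    simp only [Set.mem_setOf_eq, Pi.add_apply, add_mul, Finset.sum_add_distrib] at *
    rw [ha, hb, add_zero]
  zero_mem' := by simp
  smul_mem' c v hv := by
    simp only [Set.mem_setOf_eq, Pi.smul_apply, smul_eq_mul, mul_assoc, ← Finset.mul_sum] at *
    rw [hv, mul_zero]

/-- The syzygy triple `σ^x = (0, f_z, −f_y)` of the 2-form `df ∧ dx`. -/
noncomputable def sigx (f : S) : Fin 3 → S := ![0, pderiv 2 f, -pderiv 1 f]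
/-- The syzygy triple `σ^y = (−f_z, 0, f_x)` of the 2-form `df ∧ dy`. -/
noncomputable def sigy (f : S) : Fin 3 → S := ![-pderiv 2 f, 0, pderiv 0 f]
/-- The syzygy triple `σ^z = (f_y, −f_x, 0)` of the 2-form `df ∧ dz`. -/
noncomputable def sigz (f : S) : Fin 3 → S := ![pderiv 1 f, -pderiv 0 f, 0]

/-- The candidate generating set `G = {ρ_1, …, ρ_{m−1}, σ^y, σ^z}` (case `ℓ(C) = 1`). -/
noncomputable def G1 {m : ℕ} (F : Fin m → S) : (Fin (m - 1) ⊕ Fin 2) → (Fin 3 → S) :=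
  Sum.elim (fun j => rho F (Fin.castLE (Nat.sub_le m 1) j))
    ![sigy (∏ i, F i), sigz (∏ i, F i)]

/-- Nullstellensatz: a polynomial vanishing on the zero set has a power in the ideal. -/
lemma nss (I : Ideal S) (g : S)
    (h : ∀ p : Fin 3 → ℂ, (∀ a ∈ I, eval p a = 0) → eval p g = 0) : ∃ N : ℕ, g ^ N ∈ I := by
  have : g ∈ vanishingIdeal ℂ (zeroLocus ℂ I) := by
    intro p hp
    simpa [aeval_eq_eval] using h p (fun a ha => by simpa [aeval_eq_eval] using hp a ha)
  rw [vanishingIdeal_zeroLocus_eq_radical] at this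
  exact this

/-- Setting `x = 0`. -/
noncomputable def phi : S →ₐ[ℂ] S := aeval ![0, X 1, X 2]

lemma phi_X0 : phi (X 0) = 0 := by simp [phi]
lemma phi_X1 : phi (X 1) = X 1 := by simp [phi]
lemma phi_X2 : phi (X 2) = X 2 := by simp [phi]

lemma phi_sub (p : S) : (X 0 : S) ∣ p - phi p := by
  induction p using MvPolynomial.induction_on with
  | C a => simp [phi]
  | add p q hp hq =>
    rw [map_add, add_sub_add_comm]; exact dvd_add hp hq
  | mul_X p i hp =>
    have : (X 0 : S) ∣ X i - phi (X i) := by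
      fin_cases i
      · simp [phi_X0]
      · simp [phi_X1]
      · simp [phi_X2]
    rw [map_mul, show p * X i - phi p * phi (X i) = (p - phi p) * X i + phi p * (X i - phi (X i)) by ring]
    exact dvd_add (hp.mul_right _) (this.mul_left _)

lemma phi_const (p : S) : constantCoeff (phi p) = constantCoeff p := by
  induction p using MvPolynomial.induction_on with
  | C a => simp [phi]
  | add p q hp hq => simp [hp, hq]
  | mul_X p i hp =>
    fin_cases i <;> simp [hp, phi]

lemma not_isUnit_of_const {p : S} (h : constantCoeff p = 0) : ¬ IsUnit p := by
  intro hu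
  have := hu.map (constantCoeff (R := ℂ) (σ := Fin 3))
  rw [h] at this
  exact not_isUnit_zero this

lemma relprime_X12 (N M : ℕ) : IsRelPrime ((X 1 : S) ^ N) (X 2 ^ M) := by
  apply IsRelPrime.pow
  rw [(X_prime (R := ℂ) (σ := Fin 3) (i := 1)).irreducible.isRelPrime_iff_not_dvd, X_dvd_X]
  decide

/-- no common zeros on the line `x = 0` -/
lemma phi_relprime {a b : S}
    (h : ∀ p : Fin 3 → ℂ, p 0 = 0 → eval p a = 0 → eval p b = 0 → p = 0) :
    IsRelPrime (phi a) (phi b) := by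
  have key : ∀ g : S, constantCoeff g = 0 → ∃ N, g ^ N ∈ Ideal.span {a, b, X 0} := by
    intro g hg
    apply nss
    intro p hp
    have : p = 0 := h p
      (by simpa using hp (X 0) (Ideal.subset_span (by simp)))
      (hp a (Ideal.subset_span (by simp))) (hp b (Ideal.subset_span (by simp)))
    rw [this, ← hg]
    simp [constantCoeff_eq, MvPolynomial.eval_zero']
  have key2 : ∀ g : S, constantCoeff g = 0 → phi g = g → ∃ N : ℕ, ∀ d, d ∣ phi a → d ∣ phi b → d ∣ g ^ N := by
    intro g hg hg'
    obtain ⟨N, hN⟩ := key g hg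
    refine ⟨N, fun d ha hb => ?_⟩
    rw [Ideal.mem_span_insert] at hN
    obtain ⟨α, z, hz, hN⟩ := hN
    rw [Ideal.mem_span_pair] at hz
    obtain ⟨β, γ, rfl⟩ := hz
    have := congrArg phi hN
    simp only [map_pow, map_add, map_mul, phi_X0, hg', mul_zero, add_zero] at this
    rw [this]
    exact dvd_add (ha.mul_left _) (hb.mul_left _)
  obtain ⟨N, hN⟩ := key2 (X 1) (by simp) phi_X1
  obtain ⟨M, hM⟩ := key2 (X 2) (by simp) phi_X2
  intro d ha hb
  exact relprime_X12 N M (hN d ha hb) (hM d ha hb)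

lemma dvd_phi_iff (p : S) : (X 0 : S) ∣ p ↔ phi p = 0 := by
  constructor
  · rintro ⟨q, rfl⟩; simp [phi_X0]
  · intro h; simpa [h] using phi_sub p

/-- Syzygies modulo `x`. -/
lemma syz_mod_x {a b s t : S} (ha : constantCoeff a = 0)
    (h : ∀ p : Fin 3 → ℂ, p 0 = 0 → eval p a = 0 → eval p b = 0 → p = 0)
    (hst : (X 0 : S) ∣ a * s - b * t) :
    ∃ c : S, (X 0 : S) ∣ s - c * b ∧ (X 0 : S) ∣ t - c * a := by
  have hr := phi_relprime h
  rw [dvd_phi_iff, map_sub, map_mul, map_mul, sub_eq_zero] at hst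
  have hb : phi b ≠ 0 := by
    intro hb
    rw [hb, isRelPrime_zero_right] at hr
    exact not_isUnit_of_const (by rw [phi_const, ha]) hr
  obtain ⟨c, hc⟩ : phi b ∣ phi s := hr.symm.dvd_of_dvd_mul_left ⟨_, hst⟩
  have h1 : phi t = phi a * c := by
    apply mul_left_cancel₀ hb
    rw [← hst, hc]; ring
  have hcc : phi (phi s) = phi s := by
    have := phi_sub s
    rw [dvd_phi_iff, map_sub, sub_eq_zero] at this
    exact this.symm
  have hid : ∀ q, phi (phi q) = phi q := by
    intro q
    have := phi_sub q
    rw [dvd_phi_iff, map_sub, sub_eq_zero] at this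
    exact this.symm
  have h2 : phi b * phi c = phi s := by
    rw [← hid b, ← map_mul, ← hc, hid]
  refine ⟨c, ?_, ?_⟩
  · rw [dvd_phi_iff, map_sub, map_mul, ← h2]; ring
  · rw [dvd_phi_iff, map_sub, map_mul, ← hid t, h1, map_mul, hid]; ring

/-- A divisor, with nonzero constant term, of a nonzero homogeneous polynomial is a unit. -/
lemma isUnit_of_dvd_homog {F p : S} {n : ℕ} (hF : F.IsHomogeneous n) (hF0 : F ≠ 0)
    (hd : p ∣ F) (hc : constantCoeff p ≠ 0) : IsUnit p := by
  obtain ⟨q, hq⟩ := hd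
  let θ : S →ₐ[ℂ] Polynomial S := aeval (fun i => Polynomial.X * Polynomial.C (X i))
  have hθF : θ F = Polynomial.X ^ n * Polynomial.C F := by
    conv_rhs => rw [F.as_sum]
    conv_lhs => rw [F.as_sum]
    rw [map_sum, map_sum, Finset.mul_sum]
    refine Finset.sum_congr rfl fun d hd => ?_
    have hdeg := hF.degree_eq_sum_deg_support hd
    rw [monomial_eq]
    simp only [θ, map_mul, Finsupp.prod, map_prod, map_pow, aeval_X, mul_pow, Finset.prod_mul_distrib,
      Finset.prod_pow_eq_pow_sum]
    rw [← hdeg]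
    rw [show (aeval (R := ℂ) fun i : Fin 3 => (Polynomial.X * Polynomial.C (X i) : Polynomial S)) (C (coeff d F)) =
      Polynomial.C (C (coeff d F)) by rw [aeval_C]; rfl]
    ring
  have h1 : ∀ g, Polynomial.eval 1 (θ g) = g := by
    intro g
    induction g using MvPolynomial.induction_on with
    | C a => simp only [θ, aeval_C]; exact Polynomial.eval_C
    | add p q hp hq => simp [hp, hq]
    | mul_X p i hp => simp [hp, θ] at *; rw [hp]
  have h0 : ∀ g, Polynomial.eval 0 (θ g) = C (constantCoeff g) := by
    intro g
    induction g using MvPolynomial.induction_on with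
    | C a => simp only [θ, aeval_C, constantCoeff_C]; exact Polynomial.eval_C
    | add p q hp hq => simp [hp, hq]
    | mul_X p i hp => simp [θ] at *
  have hdvd : (Polynomial.X : Polynomial S) ^ n ∣ θ p * θ q := by
    rw [← map_mul, ← hq, hθF]; exact dvd_mul_right _ _
  have hnd : ¬ (Polynomial.X : Polynomial S) ∣ θ p := by
    rintro ⟨r, hr⟩
    have := h0 p
    rw [hr] at this
    simp at this
    exact hc (by simpa using this.symm)
  obtain ⟨r, hr⟩ := (Polynomial.prime_X (R := S)).pow_dvd_of_dvd_mul_left n hnd hdvd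
  have h3 : θ p * r = Polynomial.C F := by
    apply mul_left_cancel₀ (pow_ne_zero n (Polynomial.X_ne_zero (R := S)))
    rw [← hθF, hq, map_mul, hr]; ring
  have hne : Polynomial.C F ≠ 0 := by simpa using hF0
  have h4 : (θ p).natDegree = 0 := by
    have := congrArg Polynomial.natDegree h3
    rw [Polynomial.natDegree_mul (by rintro h; simp only [h, zero_mul, mul_zero] at h3; exact hne h3.symm)
      (by rintro h; simp only [h, zero_mul, mul_zero] at h3; exact hne h3.symm), Polynomial.natDegree_C] at this
    omega
  obtain ⟨s, hs⟩ := Polynomial.natDegree_eq_zero.1 h4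
  have h5 := h1 p
  have h6 := h0 p
  rw [← hs, Polynomial.eval_C] at h5 h6
  rw [← h5, h6]
  exact (isUnit_iff_ne_zero.2 hc).map C

/-! ### Abstract commutative algebra -/

lemma pow_nzd {R : Type*} [CommRing R] {x : R} (hx : ∀ r, x * r = 0 → r = 0) (n : ℕ) :
    ∀ r, x ^ n * r = 0 → r = 0 := by
  induction n with
  | zero => intro r hr; simpa using hr
  | succ n ih =>
    intro r hr
    rw [pow_succ, mul_assoc] at hr
    exact hx r (ih _ hr)

lemma pow_right_dvd {R : Type*} [CommRing R] {x g : R} (hg : ∀ r, x ∣ g * r → x ∣ r) (n : ℕ) :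
    ∀ r, x ∣ g ^ n * r → x ∣ r := by
  induction n with
  | zero => intro r hr; simpa using hr
  | succ n ih =>
    intro r hr
    rw [pow_succ, mul_assoc] at hr
    exact hg r (ih _ hr)

lemma pow_left_dvd {R : Type*} [CommRing R] {x g : R} (hx : ∀ r, x * r = 0 → r = 0)
    (hg : ∀ r, x ∣ g * r → x ∣ r) (n : ℕ) :
    ∀ r, x ^ n ∣ g * r → x ^ n ∣ r := by
  induction n with
  | zero => intro r _; simp
  | succ n ih =>
    intro r hr
    obtain ⟨b, rfl⟩ := ih r (dvd_trans (pow_dvd_pow x n.le_succ) hr)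
    obtain ⟨c, hc⟩ := hr
    have h1 : x ^ n * (g * b - x * c) = 0 := by
      rw [pow_succ] at hc
      linear_combination hc
    have h2 := pow_nzd hx n _ h1
    obtain ⟨t, rfl⟩ := hg b ⟨c, by linear_combination h2⟩
    exact ⟨t, by ring⟩

/-- Vectors killed by an ideal containing a nonzerodivisor. -/
lemma nzd_vec {R : Type*} [CommRing R] {a : Fin 3 → R} {x : R} (hx : ∀ r, x * r = 0 → r = 0)
    {N : ℕ} {α : Fin 3 → R} (hα : x ^ N = ∑ t, α t * a t) {l : R} (hl : ∀ t, l * a t = 0) :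
    l = 0 := by
  apply pow_nzd hx N
  rw [hα, Finset.sum_mul]
  exact Finset.sum_eq_zero fun t _ => by linear_combination α t * hl t

/-- Koszul exactness in grade two. -/
lemma koszul {R : Type*} [CommRing R] (a w : Fin 3 → R) {x g : R}
    (hx : ∀ r, x * r = 0 → r = 0) (hg : ∀ r, x ∣ g * r → x ∣ r) {N M : ℕ} {α β : Fin 3 → R}
    (hα : x ^ N = ∑ t, α t * a t) (hβ : g ^ M = ∑ t, β t * a t)
    (hw : ∀ s t, a s * w t = a t * w s) : ∃ r, ∀ s, w s = r * a s := by
  have h1 : ∀ s, x ^ N * w s = a s * ∑ t, α t * w t := by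
    intro s
    rw [hα, Finset.sum_mul, Finset.mul_sum]
    exact Finset.sum_congr rfl fun t _ => by linear_combination α t * hw t s
  have h2 : ∀ s, g ^ M * w s = a s * ∑ t, β t * w t := by
    intro s
    rw [hβ, Finset.sum_mul, Finset.mul_sum]
    exact Finset.sum_congr rfl fun t _ => by linear_combination β t * hw t s
  set u := ∑ t, α t * w t
  set v := ∑ t, β t * w t
  have h3 : g ^ M * u - x ^ N * v = 0 := by
    apply nzd_vec hx hα
    intro t
    linear_combination x ^ N * h2 t - g ^ M * h1 t
  have h4 : ∀ M r, x ^ N ∣ g ^ M * r → x ^ N ∣ r := fun M =>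
    pow_right_dvd (pow_left_dvd hx hg N) M
  obtain ⟨r, hr⟩ := h4 M u ⟨v, by linear_combination h3⟩
  refine ⟨r, fun s => ?_⟩
  have := pow_nzd hx N (w s - r * a s) (by linear_combination h1 s + a s * hr)
  linear_combination this

/-- Intersection is product. -/
lemma prod_dvd_of_nzd {R ι : Type*} [CommRing R] [DecidableEq ι] (T : Finset ι) (f : ι → R) {r : R}
    (h : ∀ j ∈ T, ∀ k ∈ T, j ≠ k → ∀ s, f j ∣ f k * s → f j ∣ s)
    (hr : ∀ j ∈ T, f j ∣ r) : ∏ j ∈ T, f j ∣ r := by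
  induction T using Finset.induction_on with
  | empty => simp
  | insert j T hj ih =>
    obtain ⟨s, rfl⟩ := ih (fun j hj k hk => h j (Finset.mem_insert_of_mem hj) k
      (Finset.mem_insert_of_mem hk)) (fun j hj => hr j (Finset.mem_insert_of_mem hj))
    have key : ∀ U ⊆ T, ∀ s, f j ∣ (∏ k ∈ U, f k) * s → f j ∣ s := by
      intro U
      induction U using Finset.induction_on with
      | empty => intro _ s hs; simpa using hs
      | insert k U hk ih2 =>
        intro hU s hs
        rw [Finset.prod_insert hk, mul_comm (f k), mul_assoc] at hs
        have hkT : k ∈ T := hU (Finset.mem_insert_self _ _)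
        exact h j (Finset.mem_insert_self _ _) k (Finset.mem_insert_of_mem hkT)
          (fun hjk => hj (hjk ▸ hkT)) s
          (ih2 (fun a ha => hU (Finset.mem_insert_of_mem ha)) _ hs)
    obtain ⟨t, rfl⟩ := key T subset_rfl s (hr j (Finset.mem_insert_self _ _))
    rw [Finset.prod_insert hj]
    exact ⟨t, by ring⟩

/-- Minimality: if all relations between generators have coefficients in the maximal ideal,
any other generating set is at least as large. -/
lemma card_le_of_relations {ι : Type*} [Fintype ι] [DecidableEq ι] (G : ι → Fin 3 → S)
    (hrel : ∀ q : ι → S, ∑ i, q i • G i = 0 → ∀ i, constantCoeff (q i) = 0)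
    (T : Finset (Fin 3 → S))
    (hT : Submodule.span S (T : Set (Fin 3 → S)) = Submodule.span S (Set.range G)) :
    Fintype.card ι ≤ T.card := by
  have hA : ∀ i, ∃ A : T → S, ∑ t : T, A t • (t : Fin 3 → S) = G i := by
    intro i
    have h : G i ∈ Submodule.span S (Set.range (fun t : T => (t : Fin 3 → S))) := by
      have : Set.range (fun t : T => (t : Fin 3 → S)) = (T : Set (Fin 3 → S)) := by
        ext; simp
      rw [this, hT]
      exact Submodule.subset_span ⟨i, rfl⟩
    exact (Submodule.mem_span_range_iff_exists_fun S).1 h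
  have hB : ∀ t : T, ∃ B : ι → S, ∑ i, B i • G i = (t : Fin 3 → S) := by
    intro t
    have h : (t : Fin 3 → S) ∈ Submodule.span S (Set.range G) := by
      rw [← hT]; exact Submodule.subset_span t.2
    exact (Submodule.mem_span_range_iff_exists_fun S).1 h
  choose A hA using hA
  choose B hB using hB
  have key : ∀ i j, ∑ t, constantCoeff (A i t) * constantCoeff (B t j) = if i = j then 1 else 0 := by
    intro i j
    have := hrel (fun j => (∑ t, A i t * B t j) - if i = j then 1 else 0) (by
      simp only [sub_smul, Finset.sum_sub_distrib, Finset.sum_smul, mul_smul, ite_smul, one_smul,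
        zero_smul, Finset.sum_ite_eq, Finset.mem_univ, if_true]
      rw [Finset.sum_comm, sub_eq_zero, ← hA i]
      refine Finset.sum_congr rfl fun t _ => ?_
      rw [← Finset.smul_sum, hB]) j
    rw [map_sub, map_sum, sub_eq_zero] at this
    simp only [map_mul] at this
    rw [this]
    split_ifs <;> simp
  let MA : Matrix ι T ℂ := fun i t => constantCoeff (A i t)
  let MB : Matrix T ι ℂ := fun t j => constantCoeff (B t j)
  have hM : MA * MB = 1 := by
    ext i j
    rw [Matrix.mul_apply, Matrix.one_apply]
    exact key i j
  have h1 := Matrix.rank_mul_le_right MA MB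
  rw [hM, Matrix.rank_one] at h1
  have h2 := MB.rank_le_card_height
  simpa using h1.trans h2

/-! ### The geometric setting -/

/-- The hypotheses on the curve. -/
structure Cfg (m : ℕ) (F : Fin m → S) (e : Fin m → ℕ) (z : Fin m) : Prop where
  hm : 3 ≤ m
  he : ∀ j, 1 ≤ e j
  hhom : ∀ j, (F j).IsHomogeneous (e j)
  hsmooth : ∀ j, ∀ p : Fin 3 → ℂ, (∀ t, eval p (pderiv t (F j)) = 0) → p = 0
  hnc : ∀ i j : Fin m, i ≠ j → ∀ p : Fin 3 → ℂ, p ≠ 0 →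
      eval p (F i) = 0 → eval p (F j) = 0 →
      LinearIndependent ℂ
        ![fun t => eval p (pderiv t (F i)), fun t => eval p (pderiv t (F j))]
  htriple : ∀ i j k : Fin m, i ≠ j → i ≠ k → j ≠ k → ∀ p : Fin 3 → ℂ, p ≠ 0 →
      ¬(eval p (F i) = 0 ∧ eval p (F j) = 0 ∧ eval p (F k) = 0)
  hF1 : F z = X 0

namespace Cfg

variable {m : ℕ} {F : Fin m → S} {e : Fin m → ℕ} {z : Fin m}

lemma cc (h : Cfg m F e z) (j : Fin m) : constantCoeff (F j) = 0 := by
  rw [constantCoeff_eq]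
  apply (h.hhom j).coeff_eq_zero
  have := h.he j
  simp; omega

lemma third (h : Cfg m F e z) (i j : Fin m) : ∃ k, k ≠ i ∧ k ≠ j := by
  by_contra! hc
  have : (Finset.univ : Finset (Fin m)) ⊆ {i, j} := by
    intro k _
    by_cases hk : k = i
    · simp [hk]
    · simp [hc k hk]
  have h1 := Finset.card_le_card this
  have h2 := Finset.card_le_two (a := i) (b := j)
  have := h.hm
  simp at h1
  omega

lemma eval_zero (h : Cfg m F e z) (j : Fin m) : eval 0 (F j) = 0 := by
  rw [← h.cc j]; simp [constantCoeff_eq]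

/-- no common zeros on `x = 0` -/
lemma nozero (h : Cfg m F e z) {i j : Fin m} (hij : i ≠ j) (hi : i ≠ z) (hj : j ≠ z)
    (p : Fin 3 → ℂ) (hp : p 0 = 0) (h1 : eval p (F i) = 0) (h2 : eval p (F j) = 0) : p = 0 := by
  by_contra hne
  exact h.htriple i j z hij hi hj p hne ⟨h1, h2, by rw [h.hF1]; simpa using hp⟩

/-- `x` is a nonzerodivisor mod `(f_i, f_j)`. -/
lemma regz (h : Cfg m F e z) {i j : Fin m} (hij : i ≠ j) (hi : i ≠ z) (hj : j ≠ z) {r : S}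
    (hr : X 0 * r ∈ Ideal.span {F i, F j}) : r ∈ Ideal.span {F i, F j} := by
  rw [Ideal.mem_span_pair] at hr ⊢
  obtain ⟨a, b, hab⟩ := hr
  obtain ⟨c, ⟨u, hu⟩, ⟨v, hv⟩⟩ := syz_mod_x (s := a) (t := -b) (h.cc i) (h.nozero hij hi hj)
    ⟨r, by linear_combination hab⟩
  refine ⟨u, -v, ?_⟩
  apply mul_left_cancel₀ (X_ne_zero (R := ℂ) (0 : Fin 3))
  linear_combination hab - F i * hu + F j * hv

/-- `f_k` is a nonzerodivisor mod `(x, f_j)`. -/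
lemma regj (h : Cfg m F e z) {j k : Fin m} (hjk : j ≠ k) (hj : j ≠ z) (hk : k ≠ z) {r : S}
    (hr : F k * r ∈ Ideal.span {X 0, F j}) : r ∈ Ideal.span {X 0, F j} := by
  rw [Ideal.mem_span_pair] at hr ⊢
  obtain ⟨a, b, hab⟩ := hr
  obtain ⟨c, ⟨u, hu⟩, -⟩ := syz_mod_x (s := r) (t := b) (h.cc k) (h.nozero hjk.symm hk hj)
    ⟨a, by linear_combination -hab⟩
  exact ⟨u, c, by linear_combination -hu⟩

/-- Any three of the `f_i` form a regular sequence. -/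
lemma reg (h : Cfg m F e z) {i j k : Fin m} (hij : i ≠ j) (hik : i ≠ k) (hjk : j ≠ k) {r : S}
    (hr : F k * r ∈ Ideal.span {F i, F j}) : r ∈ Ideal.span {F i, F j} := by
  by_cases hi : i = z
  · subst hi
    rw [h.hF1] at hr ⊢
    exact h.regj hjk hij.symm hik.symm hr
  by_cases hj : j = z
  · subst hj
    rw [h.hF1, Set.pair_comm] at hr ⊢
    exact h.regj hik hij hjk.symm hr
  by_cases hk : k = z
  · subst hk
    rw [h.hF1] at hr
    exact h.regz hij hi hj hr
  obtain ⟨N, hN⟩ := nss (Ideal.span {F k, F i, F j}) (X 0) (by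
    intro p hp
    by_cases hp0 : p = 0
    · simp [hp0]
    · exact absurd ⟨hp _ (Ideal.subset_span (by simp)), hp _ (Ideal.subset_span (by simp)),
        hp _ (Ideal.subset_span (by simp))⟩ (h.htriple i j k hij hik hjk p hp0))
  rw [Ideal.mem_span_insert] at hN
  obtain ⟨c, w, hw, hN⟩ := hN
  have h1 : X 0 ^ N * r ∈ Ideal.span {F i, F j} := by
    rw [hN, show (c * F k + w) * r = c * (F k * r) + r * w by ring]
    exact Ideal.add_mem _ (Ideal.mul_mem_left _ _ hr) (Ideal.mul_mem_left _ _ hw)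
  clear hN
  induction N with
  | zero => simpa using h1
  | succ n ih =>
    apply ih
    rw [pow_succ', mul_assoc] at h1
    exact h.regz hij hi hj h1

lemma reg_pow (h : Cfg m F e z) {i j k : Fin m} (hij : i ≠ j) (hik : i ≠ k) (hjk : j ≠ k) {r : S}
    (n : ℕ) (hr : F k ^ n * r ∈ Ideal.span {F i, F j}) : r ∈ Ideal.span {F i, F j} := by
  induction n with
  | zero => simpa using hr
  | succ n ih =>
    apply ih
    rw [pow_succ', mul_assoc] at hr
    exact h.reg hij hik hjk hr

lemma ne_zero (h : Cfg m F e z) (i : Fin m) : F i ≠ 0 := by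
  intro h0
  have := h.hsmooth i (fun _ => 1) (by simp [h0])
  simpa using congrFun this 0

lemma relprime_z (h : Cfg m F e z) {j : Fin m} (hj : j ≠ z) : IsRelPrime (X 0) (F j) := by
  rw [(X_prime (R := ℂ) (σ := Fin 3) (i := 0)).irreducible.isRelPrime_iff_not_dvd, dvd_phi_iff]
  intro h0
  obtain ⟨k, hkj, hkz⟩ := h.third j z
  have := phi_relprime (h.nozero hkj.symm hj hkz)
  rw [h0, isRelPrime_zero_left] at this
  exact not_isUnit_of_const (by rw [phi_const, h.cc]) this

lemma relprime (h : Cfg m F e z) {i j : Fin m} (hij : i ≠ j) : IsRelPrime (F i) (F j) := by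
  by_cases hi : i = z
  · subst hi; rw [h.hF1]; exact h.relprime_z hij.symm
  by_cases hj : j = z
  · subst hj; rw [h.hF1]; exact (h.relprime_z hij).symm
  intro p hpi hpj
  have hu : IsUnit (phi p) := phi_relprime (h.nozero hij hi hj) (map_dvd phi hpi) (map_dvd phi hpj)
  refine isUnit_of_dvd_homog (h.hhom i) (h.ne_zero i) hpi fun hc => ?_
  exact not_isUnit_of_const (by rw [phi_const, hc]) hu

/-- cofactor `f / f_i` -/
lemma relprime_cof (h : Cfg m F e z) (i : Fin m) :
    IsRelPrime (F i) (∏ k ∈ Finset.univ.erase i, F k) :=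
  IsRelPrime.prod_right fun k hk => h.relprime (Finset.ne_of_mem_erase hk).symm

/-- Powers lie in the gradient ideal. -/
lemma grad_pow (h : Cfg m F e z) (i j : Fin m) :
    ∃ (N : ℕ) (α : Fin 3 → S), F j ^ N = ∑ t, α t * pderiv t (F i) := by
  obtain ⟨N, hN⟩ := nss (Ideal.span (Set.range fun t => pderiv t (F i))) (F j) (by
    intro p hp
    have : p = 0 := h.hsmooth i p fun t => hp _ (Ideal.subset_span ⟨t, rfl⟩)
    rw [this, h.eval_zero])
  obtain ⟨α, hα⟩ := (Submodule.mem_span_range_iff_exists_fun S).1 hN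
  exact ⟨N, α, hα.symm⟩

end Cfg

lemma pderiv_prod' {ι : Type*} [DecidableEq ι] (T : Finset ι) (F : ι → S) (t : Fin 3) :
    pderiv t (∏ i ∈ T, F i) = ∑ i ∈ T, (∏ k ∈ T.erase i, F k) * pderiv t (F i) := by
  induction T using Finset.induction_on with
  | empty => simp
  | insert j T hj ih =>
    rw [Finset.prod_insert hj, pderiv_mul, ih, Finset.sum_insert hj, Finset.erase_insert hj,
      Finset.mul_sum, mul_comm (pderiv t _)]
    congr 1
    refine Finset.sum_congr rfl fun i hi => ?_
    have hij : j ≠ i := fun hh => hj (hh ▸ hi)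
    rw [Finset.erase_insert_of_ne hij, Finset.prod_insert
      (fun hh => hj (Finset.mem_of_mem_erase hh))]
    ring

lemma grad_prod {m : ℕ} (F : Fin m → S) :
    grad (∏ i, F i) = ∑ i, (∏ k ∈ Finset.univ.erase i, F k) • grad (F i) := by
  ext1 t
  simp only [grad, pderiv_prod', Finset.sum_apply, Pi.smul_apply, smul_eq_mul]

lemma smul_rho {m : ℕ} (F : Fin m → S) (j : Fin m) :
    F j • rho F j = crossProduct (grad (∏ i, F i)) (grad (F j)) := by
  rw [grad_prod, map_sum, LinearMap.sum_apply, rho, Finset.smul_sum,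
    ← Finset.add_sum_erase Finset.univ _ (Finset.mem_univ j)]
  simp only [map_smul, LinearMap.smul_apply, cross_self, smul_zero, zero_add]
  refine Finset.sum_congr rfl fun i hi => ?_
  rw [smul_smul]
  congr 1
  have : j ∈ Finset.univ.erase i := by
    simpa using (Finset.ne_of_mem_erase hi).symm
  rw [← Finset.mul_prod_erase _ _ this, Finset.erase_right_comm]

lemma mk_dvd_mk {f a b : S} :
    Ideal.Quotient.mk (Ideal.span {f}) a ∣ Ideal.Quotient.mk (Ideal.span {f}) b ↔
      b ∈ Ideal.span {f, a} := by
  rw [Ideal.mem_span_pair]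
  constructor
  · rintro ⟨c, hc⟩
    obtain ⟨c, rfl⟩ := Ideal.Quotient.mk_surjective c
    rw [← map_mul, Ideal.Quotient.eq, Ideal.mem_span_singleton] at hc
    obtain ⟨u, hu⟩ := hc
    exact ⟨u, c, by linear_combination -hu⟩
  · rintro ⟨u, c, hc⟩
    refine ⟨Ideal.Quotient.mk _ c, ?_⟩
    rw [← map_mul, Ideal.Quotient.eq, Ideal.mem_span_singleton]
    exact ⟨u, by linear_combination -hc⟩

lemma mk_zero_iff {f a : S} : Ideal.Quotient.mk (Ideal.span {f}) a = 0 ↔ f ∣ a := by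
  rw [Ideal.Quotient.eq_zero_iff_mem, Ideal.mem_span_singleton]

namespace Cfg

variable {m : ℕ} {F : Fin m → S} {e : Fin m → ℕ} {z : Fin m}

lemma q_nzd (h : Cfg m F e z) {i j : Fin m} (hij : i ≠ j) (r : S ⧸ Ideal.span {F i})
    (hr : Ideal.Quotient.mk (Ideal.span {F i}) (F j) * r = 0) : r = 0 := by
  obtain ⟨r, rfl⟩ := Ideal.Quotient.mk_surjective r
  rw [← map_mul, mk_zero_iff] at hr
  rw [mk_zero_iff]
  exact (h.relprime hij).dvd_of_dvd_mul_left hr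

lemma q_reg (h : Cfg m F e z) {i j k : Fin m} (hij : i ≠ j) (hik : i ≠ k) (hjk : j ≠ k)
    (r : S ⧸ Ideal.span {F i})
    (hr : Ideal.Quotient.mk (Ideal.span {F i}) (F j) ∣ Ideal.Quotient.mk (Ideal.span {F i}) (F k) * r) :
    Ideal.Quotient.mk (Ideal.span {F i}) (F j) ∣ r := by
  obtain ⟨r, rfl⟩ := Ideal.Quotient.mk_surjective r
  rw [← map_mul, mk_dvd_mk] at hr
  rw [mk_dvd_mk]
  exact h.reg hij hik hjk hr

lemma vec_dvd (h : Cfg m F e z) (i : Fin m) {l : S} (hl : ∀ t, F i ∣ l * pderiv t (F i)) :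
    F i ∣ l := by
  obtain ⟨j, hj, -⟩ := h.third i i
  obtain ⟨N, α, hα⟩ := h.grad_pow i j
  rw [← mk_zero_iff]
  apply nzd_vec (a := fun t => Ideal.Quotient.mk (Ideal.span {F i}) (pderiv t (F i)))
    (α := fun t => Ideal.Quotient.mk (Ideal.span {F i}) (α t)) (N := N) (h.q_nzd hj.symm)
  · rw [← map_pow, hα, map_sum]; simp
  · intro t
    rw [← map_mul, mk_zero_iff]; exact hl t

lemma residue (h : Cfg m F e z) (i : Fin m) {w : Fin 3 → S}
    (hw : ∀ s t, F i ∣ pderiv s (F i) * w t - pderiv t (F i) * w s) :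
    ∃ r, ∀ s, F i ∣ w s - r * pderiv s (F i) := by
  obtain ⟨j, hj, -⟩ := h.third i i
  obtain ⟨k, hk, hkj⟩ := h.third i j
  obtain ⟨N, α, hα⟩ := h.grad_pow i j
  obtain ⟨M, β, hβ⟩ := h.grad_pow i k
  obtain ⟨r, hr⟩ := koszul (fun t => Ideal.Quotient.mk (Ideal.span {F i}) (pderiv t (F i)))
    (fun t => Ideal.Quotient.mk (Ideal.span {F i}) (w t))
    (α := fun t => Ideal.Quotient.mk (Ideal.span {F i}) (α t)) (N := N)
    (β := fun t => Ideal.Quotient.mk (Ideal.span {F i}) (β t)) (M := M)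
    (h.q_nzd hj.symm) (h.q_reg hj.symm hk.symm hkj.symm)
    (by rw [← map_pow, hα, map_sum]; simp) (by rw [← map_pow, hβ, map_sum]; simp)
    (by
      intro s t
      rw [← map_mul, ← map_mul, Ideal.Quotient.eq, Ideal.mem_span_singleton]
      exact hw s t)
  obtain ⟨r, rfl⟩ := Ideal.Quotient.mk_surjective r
  refine ⟨r, fun s => ?_⟩
  have := hr s
  rwa [← map_mul, Ideal.Quotient.eq, Ideal.mem_span_singleton] at this

lemma residue_pair (h : Cfg m F e z) {i j : Fin m} (hij : i ≠ j) {w : Fin 3 → S} {r : S}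
    (hr : ∀ s, F i ∣ w s - r * pderiv s (F i))
    (hw : ∀ s t, F j ∣ pderiv s (F j) * w t - pderiv t (F j) * w s) :
    r ∈ Ideal.span {F i, F j} := by
  obtain ⟨k, hki, hkj⟩ := h.third i j
  let c : Fin 3 → Fin 3 → S := fun s t =>
    pderiv s (F j) * pderiv t (F i) - pderiv t (F j) * pderiv s (F i)
  have hc : ∀ s t, r * c s t ∈ Ideal.span {F i, F j} := by
    intro s t
    obtain ⟨a, ha⟩ := hr s
    obtain ⟨b, hb⟩ := hr t
    obtain ⟨d, hd⟩ := hw s t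
    rw [Ideal.mem_span_pair]
    exact ⟨pderiv t (F j) * a - pderiv s (F j) * b, d, by
      simp only [c]
      linear_combination -hd + pderiv s (F j) * hb - pderiv t (F j) * ha⟩
  obtain ⟨N, hN⟩ := nss (Ideal.span {F i, F j} ⊔ Ideal.span (Set.range fun st : Fin 3 × Fin 3 => c st.1 st.2))
    (F k) (by
      intro p hp
      by_cases hp0 : p = 0
      · rw [hp0, h.eval_zero]
      have h1 : eval p (F i) = 0 := hp _ (Ideal.mem_sup_left (Ideal.subset_span (by simp)))
      have h2 : eval p (F j) = 0 := hp _ (Ideal.mem_sup_left (Ideal.subset_span (by simp)))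
      have h3 : ∀ s t, eval p (c s t) = 0 := fun s t =>
        hp _ (Ideal.mem_sup_right (Ideal.subset_span ⟨(s, t), rfl⟩))
      exfalso
      apply crossProduct_ne_zero_iff_linearIndependent.2 (h.hnc i j hij p hp0 h1 h2)
      have a1 := h3 1 2
      have a2 := h3 2 0
      have a3 := h3 0 1
      simp only [c, map_sub, map_mul] at a1 a2 a3
      rw [cross_apply]
      ext t
      fin_cases t
      · simp; linear_combination -a1
      · simp; linear_combination -a2
      · simp; linear_combination -a3)
  apply h.reg_pow hij hki.symm hkj.symm N
  obtain ⟨u, hu, v, hv, huv⟩ := Submodule.mem_sup.1 hN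
  obtain ⟨g, hg⟩ := (Submodule.mem_span_range_iff_exists_fun S).1 hv
  rw [← huv, add_mul]
  refine Ideal.add_mem _ (Ideal.mul_mem_right _ _ hu) ?_
  rw [← hg, Finset.sum_mul]
  refine Ideal.sum_mem _ fun st _ => ?_
  rw [smul_eq_mul, mul_assoc, mul_comm _ r]
  exact Ideal.mul_mem_left _ _ (hc _ _)

lemma residue_full (h : Cfg m F e z) {w : Fin 3 → S}
    (hw : ∀ j s t, F j ∣ pderiv s (F j) * w t - pderiv t (F j) * w s) (i : Fin m) :
    ∃ r, ∀ t, F i ∣ w t - r * (∏ k ∈ Finset.univ.erase i, F k) * pderiv t (F i) := by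
  obtain ⟨r, hr⟩ := h.residue i (hw i)
  have h1 : ∏ j ∈ Finset.univ.erase i, Ideal.Quotient.mk (Ideal.span {F i}) (F j) ∣
      Ideal.Quotient.mk (Ideal.span {F i}) r := by
    apply prod_dvd_of_nzd
    · intro j hj k hk hjk s hs
      exact h.q_reg (Finset.ne_of_mem_erase hj).symm (Finset.ne_of_mem_erase hk).symm hjk s hs
    · intro j hj
      rw [mk_dvd_mk]
      exact h.residue_pair (Finset.ne_of_mem_erase hj).symm hr (hw j)
  rw [← map_prod, mk_dvd_mk, Ideal.mem_span_pair] at h1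
  obtain ⟨a, b, hab⟩ := h1
  refine ⟨b, fun t => ?_⟩
  obtain ⟨c, hc⟩ := hr t
  exact ⟨c + a * pderiv t (F i), by linear_combination hc - pderiv t (F i) * hab⟩

/-- Generation of logarithmic one-forms. -/
lemma log_forms (h : Cfg m F e z) {w : Fin 3 → S}
    (hw : ∀ j s t, F j ∣ pderiv s (F j) * w t - pderiv t (F j) * w s) :
    ∃ (r : Fin m → S) (u : Fin 3 → S),
      w = ∑ i, (r i * ∏ k ∈ Finset.univ.erase i, F k) • grad (F i) + (∏ i, F i) • u := by
  choose r hr using h.residue_full hw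
  have key : ∀ t, ∏ i, F i ∣ w t - ∑ i, (r i * ∏ k ∈ Finset.univ.erase i, F k) * pderiv t (F i) := by
    intro t
    apply Fintype.prod_dvd_of_isRelPrime
    · intro i j hij; exact h.relprime hij
    · intro j
      rw [← Finset.add_sum_erase Finset.univ _ (Finset.mem_univ j), ← sub_sub]
      refine dvd_sub (hr j t) (Finset.dvd_sum fun i hi => ?_)
      have : F j ∣ ∏ k ∈ Finset.univ.erase i, F k :=
        Finset.dvd_prod_of_mem F (by simpa using (Finset.ne_of_mem_erase hi).symm)
      exact (this.mul_left _).mul_right _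
  choose u hu using key
  refine ⟨r, u, ?_⟩
  ext1 t
  simp only [Pi.add_apply, Finset.sum_apply, Pi.smul_apply, smul_eq_mul, grad]
  linear_combination hu t

lemma euler (h : Cfg m F e z) (i : Fin m) :
    ∑ t, X t * pderiv t (F i) = (e i : S) * F i := by
  rw [(h.hhom i).sum_X_mul_pderiv, nsmul_eq_mul]

lemma euler_prod (h : Cfg m F e z) :
    ∑ t, X t * pderiv t (∏ i, F i) = ((∑ i, e i : ℕ) : S) * ∏ i, F i := by
  rw [(IsHomogeneous.prod Finset.univ F e fun i _ => h.hhom i).sum_X_mul_pderiv, nsmul_eq_mul]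

lemma prod_ne_zero (h : Cfg m F e z) : ∏ i, F i ≠ 0 :=
  Finset.prod_ne_zero_iff.2 fun i _ => h.ne_zero i

lemma deg_ne_zero (h : Cfg m F e z) : ((∑ i, e i : ℕ) : ℂ) ≠ 0 := by
  have : e z ≤ ∑ i, e i := Finset.single_le_sum (fun _ _ => Nat.zero_le _) (Finset.mem_univ z)
  have := h.he z
  exact Nat.cast_ne_zero.2 (by omega)

/-- A syzygy is logarithmic along each component. -/
lemma log_of_syz (h : Cfg m F e z) {v : Fin 3 → S} (hv : v ∈ D0 (∏ i, F i)) (j : Fin m) :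
    F j ∣ ∑ t, v t * pderiv t (F j) := by
  have hv : ∑ t, v t * pderiv t (∏ i, F i) = 0 := hv
  simp only [pderiv_prod', Finset.mul_sum] at hv
  rw [Finset.sum_comm, ← Finset.add_sum_erase Finset.univ _ (Finset.mem_univ j)] at hv
  apply (h.relprime_cof j).dvd_of_dvd_mul_left
  rw [Finset.mul_sum]
  have h2 : F j ∣ ∑ i ∈ Finset.univ.erase j, ∑ t, v t * ((∏ k ∈ Finset.univ.erase i, F k) * pderiv t (F i)) := by
    refine Finset.dvd_sum fun i hi => Finset.dvd_sum fun t _ => ?_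
    have : F j ∣ ∏ k ∈ Finset.univ.erase i, F k :=
        Finset.dvd_prod_of_mem F (by simpa using (Finset.ne_of_mem_erase hi).symm)
    exact (this.mul_right _).mul_left _
  have h3 : ∑ t, (∏ k ∈ Finset.univ.erase j, F k) * (v t * pderiv t (F j)) =
      ∑ t, v t * ((∏ k ∈ Finset.univ.erase j, F k) * pderiv t (F j)) :=
    Finset.sum_congr rfl fun t _ => by ring
  rw [h3, eq_neg_of_add_eq_zero_left hv]
  exact (dvd_neg).2 h2

/-- Generation, with all generators. -/
lemma gen (h : Cfg m F e z) {v : Fin 3 → S} (hv : v ∈ D0 (∏ i, F i)) :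
    ∃ (r : Fin m → S) (u : Fin 3 → S),
      v = ∑ i, r i • rho F i + crossProduct (grad (∏ i, F i)) u := by
  set f := ∏ i, F i with hf
  let E : Fin 3 → S := fun t => X t
  have hw : ∀ j s t, F j ∣ pderiv s (F j) * (crossProduct E v) t - pderiv t (F j) * (crossProduct E v) s := by
    intro j
    obtain ⟨g, hg⟩ := h.log_of_syz hv j
    have he := h.euler j
    rw [Fin.sum_univ_three] at hg he
    intro s t
    rw [cross_apply]
    fin_cases s <;> fin_cases t <;> simp [E]
    · exact ⟨g * X 2 - (e j : S) * v 2, by linear_combination X 2 * hg - v 2 * he⟩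
    · exact ⟨-(g * X 1 - (e j : S) * v 1), by linear_combination -X 1 * hg + v 1 * he⟩
    · exact ⟨-(g * X 2 - (e j : S) * v 2), by linear_combination -X 2 * hg + v 2 * he⟩
    · exact ⟨g * X 0 - (e j : S) * v 0, by linear_combination X 0 * hg - v 0 * he⟩
    · exact ⟨g * X 1 - (e j : S) * v 1, by linear_combination X 1 * hg - v 1 * he⟩
    · exact ⟨-(g * X 0 - (e j : S) * v 0), by linear_combination -X 0 * hg + v 0 * he⟩
  obtain ⟨r, u, hru⟩ := h.log_forms hw
  have hv' : ∑ t, v t * pderiv t f = 0 := hv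
  have heu := h.euler_prod
  rw [← hf] at heu
  have h1 : crossProduct (grad f) (crossProduct E v) = -(((∑ i, e i : ℕ) : S) * f) • v := by
    rw [Fin.sum_univ_three] at hv' heu
    ext1 t
    rw [cross_apply, cross_apply]
    simp only [Pi.smul_apply, Pi.neg_apply, smul_eq_mul, grad]
    fin_cases t <;> simp [E, -Nat.cast_sum]
    · linear_combination X 0 * hv' - v 0 * heu
    · linear_combination X 1 * hv' - v 1 * heu
    · linear_combination X 2 * hv' - v 2 * heu
  have h2 : crossProduct (grad f) (crossProduct E v) =
      f • (∑ i, r i • rho F i + crossProduct (grad f) u) := by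
    rw [hru, map_add, map_sum, map_smul, smul_add, Finset.smul_sum]
    congr 1
    refine Finset.sum_congr rfl fun i _ => ?_
    rw [map_smul, ← smul_rho, smul_smul, smul_smul, hf,
      ← Finset.mul_prod_erase Finset.univ F (Finset.mem_univ i)]
    congr 1
    ring
  let k : S := C (-((∑ i, e i : ℕ) : ℂ)⁻¹)
  have hk : k * ((∑ i, e i : ℕ) : S) = -1 := by
    have : ((∑ i, e i : ℕ) : S) = C ((∑ i, e i : ℕ) : ℂ) := by simp
    rw [this, ← C_mul, neg_mul, inv_mul_cancel₀ h.deg_ne_zero]; simp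
  refine ⟨fun i => k * r i, k • u, ?_⟩
  rw [h1] at h2
  have h3 : f • v = f • (k • (∑ i, r i • rho F i + crossProduct (grad f) u)) := by
    rw [smul_comm f k, ← h2, smul_smul]
    congr 1
    linear_combination f * hk
  have h4 : v = k • (∑ i, r i • rho F i + crossProduct (grad f) u) := by
    ext1 t
    have := congrFun h3 t
    simp only [Pi.smul_apply, smul_eq_mul] at this
    exact mul_left_cancel₀ h.prod_ne_zero this
  rw [h4, smul_add, Finset.smul_sum, map_smul]
  simp only [smul_smul]

end Cfg

lemma cross_sig (f : S) (u : Fin 3 → S) :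
    crossProduct (grad f) u = u 0 • sigx f + u 1 • sigy f + u 2 • sigz f := by
  rw [cross_apply]
  ext1 t
  fin_cases t <;> simp [sigx, sigy, sigz, grad] <;> ring

lemma cross_mem_D0 (f : S) (u : Fin 3 → S) : crossProduct (grad f) u ∈ D0 f := by
  change ∑ t, crossProduct (grad f) u t * pderiv t f = 0
  rw [Fin.sum_univ_three, cross_apply]
  simp [grad]
  ring

namespace Cfg

variable {m : ℕ} {F : Fin m → S} {e : Fin m → ℕ} {z : Fin m}

lemma smul_cancel (h : Cfg m F e z) {v w : Fin 3 → S} (hvw : (∏ i, F i) • v = (∏ i, F i) • w) :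
    v = w := by
  ext1 t
  have := congrFun hvw t
  simp only [Pi.smul_apply, smul_eq_mul] at this
  exact mul_left_cancel₀ h.prod_ne_zero this

lemma rho_mem (h : Cfg m F e z) (j : Fin m) : rho F j ∈ D0 (∏ i, F i) := by
  have h1 : F j • rho F j ∈ D0 (∏ i, F i) := by
    rw [smul_rho]; exact cross_mem_D0 _ _
  have h2 : ∑ t, (F j • rho F j) t * pderiv t (∏ i, F i) = 0 := h1
  change ∑ t, rho F j t * pderiv t (∏ i, F i) = 0
  simp only [Pi.smul_apply, smul_eq_mul, mul_assoc, ← Finset.mul_sum] at h2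
  exact (mul_eq_zero.1 h2).resolve_left (h.ne_zero j)

lemma cross_sum (q : Fin m → S) (b : Fin 3 → S) :
    crossProduct (grad (∏ i, F i))
      (∑ i, (q i * ∏ k ∈ Finset.univ.erase i, F k) • grad (F i) + (∏ i, F i) • b) =
      (∏ i, F i) • (∑ i, q i • rho F i + crossProduct (grad (∏ i, F i)) b) := by
  rw [map_add, map_sum, map_smul, smul_add, Finset.smul_sum]
  congr 1
  refine Finset.sum_congr rfl fun i _ => ?_
  rw [map_smul, ← smul_rho, smul_smul, smul_smul,
    ← Finset.mul_prod_erase Finset.univ F (Finset.mem_univ i)]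
  congr 1
  ring

lemma sum_rho (h : Cfg m F e z) : ∑ i, rho F i = 0 := by
  apply h.smul_cancel
  have := cross_sum (F := F) (fun _ => 1) 0
  simp only [one_mul, one_smul, smul_zero, add_zero, map_zero] at this
  rw [← this, ← grad_prod, cross_self, smul_zero]

lemma sigx_eq (h : Cfg m F e z) : sigx (∏ i, F i) = (X 0 : S) • rho F z := by
  have := smul_rho F z
  rw [cross_sig, h.hF1] at this
  rw [this]
  simp [grad, pderiv_X]

lemma euler_W (h : Cfg m F e z) (q : Fin m → S) (b : Fin 3 → S) :
    ∑ t, X t * (∑ i, (q i * ∏ k ∈ Finset.univ.erase i, F k) • grad (F i) + (∏ i, F i) • b) t =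
      (∏ i, F i) * (∑ i, q i * (e i : S) + ∑ t, X t * b t) := by
  have h1 : ∀ t, X t * (∑ i, (q i * ∏ k ∈ Finset.univ.erase i, F k) • grad (F i)
      + (∏ i, F i) • b) t =
      ∑ i, X t * (q i * (∏ k ∈ Finset.univ.erase i, F k) * pderiv t (F i))
        + (∏ i, F i) * (X t * b t) := by
    intro t
    rw [Pi.add_apply, Finset.sum_apply, Pi.smul_apply, smul_eq_mul, mul_add, Finset.mul_sum]
    simp only [Pi.smul_apply, smul_eq_mul, grad]
    ring
  have h2 : ∀ i, ∑ t, X t * (q i * (∏ k ∈ Finset.univ.erase i, F k) * pderiv t (F i)) =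
      (∏ i, F i) * (q i * (e i : S)) := by
    intro i
    have := h.euler i
    rw [← Finset.mul_prod_erase Finset.univ F (Finset.mem_univ i)]
    calc ∑ t, X t * (q i * (∏ k ∈ Finset.univ.erase i, F k) * pderiv t (F i))
        = (q i * (∏ k ∈ Finset.univ.erase i, F k)) * ∑ t, X t * pderiv t (F i) := by
          rw [Finset.mul_sum]; exact Finset.sum_congr rfl fun t _ => by ring
      _ = _ := by rw [this]; ring
  rw [Finset.sum_congr rfl fun t _ => h1 t, Finset.sum_add_distrib, Finset.sum_comm,
    Finset.sum_congr rfl fun i _ => h2 i, ← Finset.mul_sum, ← Finset.mul_sum, mul_add]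

set_option maxHeartbeats 1000000 in
/-- Relations between the generators have no constant terms. -/
lemma rel (h : Cfg m F e z) (hl : ∀ j, j ≠ z → 2 ≤ e j) {q : Fin m → S} {b : Fin 3 → S}
    {l : Fin m} (hql : q l = 0) (hb : b 0 = 0)
    (hrel : ∑ i, q i • rho F i + crossProduct (grad (∏ i, F i)) b = 0) :
    (∀ j, constantCoeff (q j) = 0) ∧ ∀ t, constantCoeff (b t) = 0 := by
  have hX := cross_sum (F := F) q b
  rw [hrel, smul_zero] at hX
  have heu := h.euler_prod
  have hgr := grad_prod F
  have hf0 := h.prod_ne_zero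
  have hd0 := h.deg_ne_zero
  set d : S := ((∑ i, e i : ℕ) : S) with hd
  have hcd : constantCoeff d ≠ 0 := by
    rw [hd, map_natCast]; exact hd0
  set f := ∏ i, F i with hf
  set W := ∑ i, (q i * ∏ k ∈ Finset.univ.erase i, F k) • grad (F i) + f • b with hW
  let H : S := ∑ i, q i * (e i : S) + ∑ t, X t * b t
  have hEW : ∑ t, X t * W t = f * H := h.euler_W q b
  have hWH : ∀ t, d * W t = H * pderiv t f := by
    intro t
    apply mul_left_cancel₀ hf0
    rw [Fin.sum_univ_three] at hEW heu
    have c0 := congrFun hX 0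
    have c1 := congrFun hX 1
    have c2 := congrFun hX 2
    rw [cross_apply] at c0 c1 c2
    simp only [grad, Matrix.cons_val, Pi.zero_apply] at c0 c1 c2
    fin_cases t
    · change f * (d * W 0) = f * (H * pderiv 0 f)
      linear_combination -W 0 * heu + pderiv 0 f * hEW - X 1 * c2 + X 2 * c1
    · change f * (d * W 1) = f * (H * pderiv 1 f)
      linear_combination -W 1 * heu + pderiv 1 f * hEW - X 2 * c0 + X 0 * c2
    · change f * (d * W 2) = f * (H * pderiv 2 f)
      linear_combination -W 2 * heu + pderiv 2 f * hEW - X 0 * c1 + X 1 * c0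
  have hsum : ∀ t, ∑ i, (d * q i - H) * ((∏ k ∈ Finset.univ.erase i, F k) * pderiv t (F i))
      + d * f * b t = 0 := by
    intro t
    have h1 := hWH t
    have h2 := congrFun hgr t
    simp only [hW, Pi.add_apply, Finset.sum_apply, Pi.smul_apply, smul_eq_mul, grad] at h1 h2
    rw [h2, mul_add, Finset.mul_sum, Finset.mul_sum] at h1
    simp only [sub_mul, Finset.sum_sub_distrib]
    rw [← h1]
    have : ∑ i, d * q i * ((∏ k ∈ Finset.univ.erase i, F k) * pderiv t (F i)) =
      ∑ i, d * (q i * (∏ k ∈ Finset.univ.erase i, F k) * pderiv t (F i)) :=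
      Finset.sum_congr rfl fun i _ => by ring
    rw [this]; ring
  have hdvd : ∀ j, F j ∣ d * q j - H := by
    intro j
    apply h.vec_dvd j
    intro t
    apply (h.relprime_cof j).dvd_of_dvd_mul_left
    have h1 := hsum t
    rw [← Finset.add_sum_erase Finset.univ _ (Finset.mem_univ j), add_assoc] at h1
    rw [show (∏ k ∈ Finset.univ.erase j, F k) * ((d * q j - H) * pderiv t (F j)) =
      (d * q j - H) * ((∏ k ∈ Finset.univ.erase j, F k) * pderiv t (F j)) by ring,
      eq_neg_of_add_eq_zero_left h1, dvd_neg]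
    refine dvd_add (Finset.dvd_sum fun i hi => ?_) ?_
    · have : F j ∣ ∏ k ∈ Finset.univ.erase i, F k :=
        Finset.dvd_prod_of_mem F (by simpa using (Finset.ne_of_mem_erase hi).symm)
      exact (this.mul_right _).mul_left _
    · have : F j ∣ f := Finset.dvd_prod_of_mem F (Finset.mem_univ j)
      exact (this.mul_left _).mul_right _
  choose s hs using hdvd
  have hcQ : ∀ j, constantCoeff d * constantCoeff (q j) = constantCoeff H := by
    intro j
    have := congrArg constantCoeff (hs j)
    rw [map_mul, h.cc, zero_mul, map_sub, map_mul, sub_eq_zero] at this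
    exact this
  have hcH : constantCoeff H = 0 := by
    rw [← hcQ l, hql, map_zero, mul_zero]
  refine ⟨fun j => ?_, fun t => ?_⟩
  · have := hcQ j
    rw [hcH] at this
    exact (mul_eq_zero.1 this).resolve_left hcd
  · by_cases ht : t = 0
    · rw [ht, hb, map_zero]
    have h1 : ∑ i, s i * pderiv t (F i) + d * b t = 0 := by
      apply mul_left_cancel₀ hf0
      rw [mul_zero, ← hsum t, mul_add, Finset.mul_sum]
      congr 1
      · refine Finset.sum_congr rfl fun i _ => ?_
        rw [hs, hf, ← Finset.mul_prod_erase Finset.univ F (Finset.mem_univ i)]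
        ring
      · ring
    have h2 : ∀ i, constantCoeff (pderiv t (F i)) = 0 := by
      intro i
      by_cases hi : i = z
      · rw [hi, h.hF1, pderiv_X_of_ne (Ne.symm ht), map_zero]
      · have h3 : (pderiv t (F i)).IsHomogeneous (e i - 1) := (h.hhom i).pderiv
        rw [constantCoeff_eq]
        apply h3.coeff_eq_zero
        have := hl i hi
        simp; omega
    have h4 := congrArg constantCoeff h1
    rw [map_add, map_sum, map_mul, map_zero] at h4
    simp only [map_mul, h2, mul_zero, Finset.sum_const_zero, zero_add] at h4
    exact (mul_eq_zero.1 h4).resolve_left hcd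

lemma span_eq {n : ℕ} {F : Fin (n + 1) → S} {e : Fin (n + 1) → ℕ} {z : Fin (n + 1)}
    (h : Cfg (n + 1) F e z) :
    D0 (∏ i, F i) = Submodule.span S (Set.range (G1 F)) := by
  have hy : sigy (∏ i, F i) ∈ Submodule.span S (Set.range (G1 F)) :=
    Submodule.subset_span ⟨Sum.inr 0, rfl⟩
  have hz : sigz (∏ i, F i) ∈ Submodule.span S (Set.range (G1 F)) :=
    Submodule.subset_span ⟨Sum.inr 1, rfl⟩
  have hr1 : ∀ j : Fin n, rho F j.castSucc ∈ Submodule.span S (Set.range (G1 F)) :=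
    fun j => Submodule.subset_span ⟨Sum.inl j, rfl⟩
  have hr : ∀ j, rho F j ∈ Submodule.span S (Set.range (G1 F)) := by
    intro j
    induction j using Fin.lastCases with
    | cast j => exact hr1 j
    | last =>
      have := h.sum_rho
      rw [Fin.sum_univ_castSucc] at this
      rw [eq_neg_of_add_eq_zero_right this]
      exact Submodule.neg_mem _ (Submodule.sum_mem _ fun j _ => hr1 j)
  apply le_antisymm
  · intro v hv
    obtain ⟨r, u, rfl⟩ := h.gen hv
    rw [cross_sig, h.sigx_eq]
    refine Submodule.add_mem _ (Submodule.sum_mem _ fun i _ => Submodule.smul_mem _ _ (hr i)) ?_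
    exact Submodule.add_mem _ (Submodule.add_mem _
      (Submodule.smul_mem _ _ (Submodule.smul_mem _ _ (hr z))) (Submodule.smul_mem _ _ hy))
      (Submodule.smul_mem _ _ hz)
  · rw [Submodule.span_le]
    rintro _ ⟨i, rfl⟩
    rcases i with j | j
    · exact h.rho_mem _
    · fin_cases j
      · have := cross_mem_D0 (∏ i, F i) ![0, 1, 0]
        rw [cross_sig] at this
        simpa [G1] using this
      · have := cross_mem_D0 (∏ i, F i) ![0, 0, 1]
        rw [cross_sig] at this
        simpa [G1] using this

lemma g1_rel {n : ℕ} {F : Fin (n + 1) → S} {e : Fin (n + 1) → ℕ} {z : Fin (n + 1)}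
    (h : Cfg (n + 1) F e z) (_hn : 1 ≤ n) (hl : ∀ j, j ≠ z → 2 ≤ e j)
    (q : Fin (n + 1 - 1) ⊕ Fin 2 → S) (hq : ∑ i, q i • G1 F i = 0) :
    ∀ i, constantCoeff (q i) = 0 := by
  let Q : Fin (n + 1) → S := Fin.lastCases (motive := fun _ => S) 0 (fun j : Fin n => q (Sum.inl j))
  have hQ : ∀ j : Fin n, Q j.castSucc = q (Sum.inl j) := fun j => by simp [Q]
  have hQl : Q (Fin.last n) = 0 := by simp [Q]
  have := h.rel hl (q := Q) (b := ![0, q (Sum.inr 0), q (Sum.inr 1)]) (l := Fin.last n) hQl rfl (by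
    rw [cross_sig, Fin.sum_univ_castSucc, hQl, ← hq, Fintype.sum_sum_type, Fin.sum_univ_two]
    simp only [hQ, zero_smul, add_zero, Matrix.cons_val, zero_add]
    rfl)
  rintro (j | j)
  · rw [← hQ j]; exact this.1 _
  · fin_cases j
    · exact this.2 1
    · exact this.2 2

end Cfg

/-- if `ℓ(C) = 1` with `f_1 = x` (so `e_1 = 1` and `e_j ≥ 2` for `j ≥ 2`),
then `D₀(f)` is generated by `G = {ρ_1, …, ρ_{m−1}, σ^y, σ^z}`, this generating set is
minimal, and every generating set of `D₀(f)` has at least `m + 1` elements, so `C` is an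
`(m+1)`-syzygy curve with exponents `d_1 = ⋯ = d_{m−1} = d−2`, `d_m = d_{m+1} = d−1`. -/
theorem caseL1_minimal_generators
    (m : ℕ) (hm : 4 ≤ m) (F : Fin m → S) (e : Fin m → ℕ)
    (he : ∀ j, 1 ≤ e j)
    (hhom : ∀ j, (F j).IsHomogeneous (e j))
    (hsmooth : ∀ j, ∀ p : Fin 3 → ℂ,
      (∀ t, eval p (pderiv t (F j)) = 0) → p = 0)
    (hnc : ∀ i j : Fin m, i ≠ j → ∀ p : Fin 3 → ℂ, p ≠ 0 →
      eval p (F i) = 0 → eval p (F j) = 0 →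
      LinearIndependent ℂ
        ![fun t => eval p (pderiv t (F i)), fun t => eval p (pderiv t (F j))])
    (htriple : ∀ i j k : Fin m, i ≠ j → i ≠ k → j ≠ k → ∀ p : Fin 3 → ℂ, p ≠ 0 →
      ¬(eval p (F i) = 0 ∧ eval p (F j) = 0 ∧ eval p (F k) = 0))
    (hF1 : F ⟨0, by omega⟩ = X 0) (he1 : e ⟨0, by omega⟩ = 1)
    (hl1 : ∀ j : Fin m, 1 ≤ (j : ℕ) → 2 ≤ e j) :
    D0 (∏ i, F i) = Submodule.span S (Set.range (G1 F)) ∧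
    (∀ i : Fin (m - 1) ⊕ Fin 2, G1 F i ∉ Submodule.span S (G1 F '' {i}ᶜ)) ∧
    (∀ T : Finset (Fin 3 → S),
      Submodule.span S (T : Set (Fin 3 → S)) = D0 (∏ i, F i) → m + 1 ≤ T.card) := by
  classical
  obtain ⟨n, rfl⟩ : ∃ n, m = n + 1 := ⟨m - 1, by omega⟩
  have h : Cfg (n + 1) F e ⟨0, by omega⟩ :=
    ⟨by omega, he, hhom, hsmooth, hnc, htriple, hF1⟩
  have hgen := h.span_eq
  have hrel : ∀ q : Fin (n + 1 - 1) ⊕ Fin 2 → S, ∑ i, q i • G1 F i = 0 →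
      ∀ i, constantCoeff (q i) = 0 := by
    refine h.g1_rel (by omega) fun j hj => hl1 j ?_
    by_contra hc
    exact hj (Fin.ext (by change (j : ℕ) = 0; omega))
  have hcard : Fintype.card (Fin (n + 1 - 1) ⊕ Fin 2) = n + 2 := by simp
  have h3 : ∀ T : Finset (Fin 3 → S),
      Submodule.span S (T : Set (Fin 3 → S)) = D0 (∏ i, F i) → n + 1 + 1 ≤ T.card := by
    intro T hT
    have := card_le_of_relations (G1 F) hrel T (hT.trans hgen)
    omega
  refine ⟨hgen, ?_, h3⟩
  intro i hi
  have hT := h3 ((Finset.univ.erase i).image (G1 F)) (by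
    rw [hgen]
    have hcoe : (((Finset.univ.erase i).image (G1 F) : Finset _) : Set (Fin 3 → S)) =
        G1 F '' {i}ᶜ := by
      ext v; simp
    rw [hcoe]
    apply le_antisymm
    · exact Submodule.span_mono (Set.image_subset_range _ _)
    · rw [Submodule.span_le]
      rintro _ ⟨j, rfl⟩
      by_cases hj : j = i
      · rw [hj]; exact hi
      · exact Submodule.subset_span ⟨j, hj, rfl⟩)
  have h5 := Finset.card_image_le (s := Finset.univ.erase i) (f := G1 F)
  rw [Finset.card_erase_of_mem (Finset.mem_univ i), Finset.card_univ, hcard] at h5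
  omega
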